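/- Let D be an n×n real matrix, let P be an n×n permutation matrix, and let D' = Pᵀ * D * P. Suppose Dᵀ * D = V * Σ * Vᵀ with V orthogonal and Σ diagonal, and let Ṽ = V.submatrix id f be the matrix of the first m columns of V (f : Fin m → n an injection). Setting W = Pᵀ * V and W̃ = W.submatrix id f, one has: W is orthogonal, D'ᵀ * D' = W * Σ * Wᵀ, W̃ = Pᵀ * Ṽ, and D' * W̃ = Pᵀ * (D * Ṽ). That is, performing the rank-m eigenvector projection (PCA with this eigendecomposition) on the permuted matrix D' yields exactly the row-permutation by Pᵀ of the projection of D. -/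

import Mathlib

open Matrix

/-!
The left factor of `D' = U * D * P` cancels in the Gram matrix `D'ᴴ * D'` because `Uᴴ * U = 1`, so
`Pᴴ` carries an eigenbasis of `Dᴴ * D` to one of `D'ᴴ * D'`. Projecting onto the new eigenvectors,
the factor `Pᴴ` meets the `P` in `D'` and disappears, so only `U` survives.
For a permuted matrix, `U = Pᴴ`.
-/

section UnitaryEquivalence

variable {k l m n p R : Type*} [Semiring R]

theorem mul_mul_mul_cancel_middle [Fintype m] [Fintype n] [DecidableEq n] {B : Matrix n m R}
    {C : Matrix m n R} (hBC : B * C = 1) (A : Matrix l n R) (E : Matrix n p R) :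
    A * B * (C * E) = A * E := by
  rw [Matrix.mul_assoc, ← Matrix.mul_assoc B, hBC, Matrix.one_mul]

variable [StarRing R]

theorem permMatrix_mem_unitary [Fintype n] [DecidableEq n] (σ : Equiv.Perm n) :
    σ.permMatrix R ∈ unitary (Matrix n n R) := by
  rw [Unitary.mem_iff, star_eq_conjTranspose, conjTranspose_permMatrix, ← permMatrix_mul,
    ← permMatrix_mul, mul_inv_cancel, inv_mul_cancel, permMatrix_one]
  exact ⟨rfl, rfl⟩

theorem mul_mul_conjTranspose_mul_eq_one [Fintype m] [Fintype n] [DecidableEq l] [DecidableEq m]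
    {A : Matrix l m R} {B : Matrix m n R} (hA : A * Aᴴ = 1) (hB : B * Bᴴ = 1) :
    A * B * (A * B)ᴴ = 1 := by
  rw [conjTranspose_mul, mul_mul_mul_cancel_middle hB, hA]

theorem conjTranspose_mul_self_isometry_mul [Fintype l] [Fintype p] [DecidableEq l]
    {U : Matrix p l R} (hU : Uᴴ * U = 1) (A : Matrix l n R) :
    (U * A)ᴴ * (U * A) = Aᴴ * A := by
  rw [conjTranspose_mul, mul_mul_mul_cancel_middle hU]

theorem conjTranspose_mul_self_mul_right_of_eq [Fintype k] [Fintype l] [Fintype n]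
    {A : Matrix l n R} {V : Matrix n k R} {S : Matrix k k R} (hA : Aᴴ * A = V * S * Vᴴ)
    (B : Matrix n m R) :
    (A * B)ᴴ * (A * B) = Bᴴ * V * S * (Bᴴ * V)ᴴ :=
  calc (A * B)ᴴ * (A * B) = Bᴴ * (Aᴴ * A) * B := by
        simp only [conjTranspose_mul, Matrix.mul_assoc]
    _ = Bᴴ * V * S * (Bᴴ * V)ᴴ := by
        simp only [hA, conjTranspose_mul, conjTranspose_conjTranspose, Matrix.mul_assoc]

theorem pca_permutation_equivariant_general [Fintype k] [Fintype l] [Fintype n] [Fintype p]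
    [DecidableEq l] [DecidableEq n] {U : Matrix p l R} {P : Matrix n n R} {D : Matrix l n R}
    {V : Matrix n k R} {S : Matrix k k R} (hU : Uᴴ * U = 1)
    (hP : P ∈ unitary (Matrix n n R)) (hV : V * Vᴴ = 1) (hdecomp : Dᴴ * D = V * S * Vᴴ)
    (f : m → k) {D' : Matrix p n R} {W : Matrix n k R} (hD' : D' = U * D * P)
    (hW : W = Pᴴ * V) :
    W * Wᴴ = 1 ∧
    D'ᴴ * D' = W * S * Wᴴ ∧
    W.submatrix id f = Pᴴ * V.submatrix id f ∧
    D' * W.submatrix id f = U * (D * V.submatrix id f) := by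
  subst hD' hW
  have hPP : P * Pᴴ = 1 := Unitary.mul_star_self_of_mem hP
  have hPP' : Pᴴ * Pᴴᴴ = 1 := Unitary.mul_star_self_of_mem (Unitary.star_mem hP)
  have hgram : (U * D)ᴴ * (U * D) = V * S * Vᴴ :=
    (conjTranspose_mul_self_isometry_mul hU D).trans hdecomp
  have hsub : (Pᴴ * V).submatrix id f = Pᴴ * V.submatrix id f :=
    submatrix_mul _ _ id id f Function.bijective_id
  refine ⟨mul_mul_conjTranspose_mul_eq_one hPP' hV,
    conjTranspose_mul_self_mul_right_of_eq hgram P, hsub, ?_⟩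
  rw [hsub, mul_mul_mul_cancel_middle hPP, Matrix.mul_assoc]

end UnitaryEquivalence

/-- PCA projection is permutation-equivariant: given an eigendecomposition
`Dᵀ * D = V * Σ * Vᵀ` (`V` orthogonal, `Σ` diagonal), a permutation matrix `P`,
`D' = Pᵀ * D * P`, `W = Pᵀ * V`, and a selection `f : Fin m → n` of columns, the
matrix `W` is orthogonal, `D'ᵀ * D' = W * Σ * Wᵀ`, the selected columns satisfy
`W̃ = Pᵀ * Ṽ`, and the projections satisfy `D' * W̃ = Pᵀ * (D * Ṽ)`. -/
theorem pca_permutation_equivariant {n : Type*} [Fintype n] [DecidableEq n] {m : ℕ}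
    (σ : Equiv.Perm n) (D D' V S W : Matrix n n ℝ)
    (f : Fin m → n) (hf : Function.Injective f)
    (hV : V * Vᵀ = 1) (hS : S.IsDiag)
    (hdecomp : Dᵀ * D = V * S * Vᵀ)
    (hD' : D' = (σ.permMatrix ℝ)ᵀ * D * σ.permMatrix ℝ)
    (hW : W = (σ.permMatrix ℝ)ᵀ * V) :
    W * Wᵀ = 1 ∧
    D'ᵀ * D' = W * S * Wᵀ ∧
    W.submatrix id f = (σ.permMatrix ℝ)ᵀ * (V.submatrix id f) ∧
    D' * (W.submatrix id f) = (σ.permMatrix ℝ)ᵀ * (D * V.submatrix id f) := by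
  have hσ : σ.permMatrix ℝ ∈ unitary (Matrix n n ℝ) := permMatrix_mem_unitary σ
  simp only [← conjTranspose_eq_transpose_of_trivial] at hV hdecomp hD' hW ⊢
  exact pca_permutation_equivariant_general
    (Unitary.star_mul_self_of_mem (Unitary.star_mem hσ)) hσ hV hdecomp f hD' hW
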